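/- Let F, K be positive integers and 0 ≤ Z < F such that (Z + 1) divides K(F − Z). If s(F, K, Z) = K(F − Z)/(Z + 1), then for every integer x with 0 ≤ x < (Z + 1)/(F − Z) and K − x ≥ 1, s(F, K − x, Z) = K(F − Z)/(Z + 1). -/

import Mathlib

open scoped Classical

/-- A placement delivery array with parameters `(F, K, Z)` over alphabet `S`:
an `F × K` array of cells that are either empty (`none`) or an element of `S`,
such that each column has exactly `Z` empty cells, no element occurs twice in a
row or in a column, and two equal entries in positions `(j₁,k₁)`, `(j₂,k₂)`
force the cells `(j₁,k₂)` and `(j₂,k₁)` to be empty. -/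
def IsPDA {S : Type} (F K Z : ℕ) (A : Fin F → Fin K → Option S) : Prop :=
  (∀ k : Fin K, (Finset.univ.filter fun j : Fin F => A j k = none).card = Z) ∧
  (∀ (j : Fin F) (k₁ k₂ : Fin K) (t : S), A j k₁ = some t → A j k₂ = some t → k₁ = k₂) ∧
  (∀ (j₁ j₂ : Fin F) (k : Fin K) (t : S), A j₁ k = some t → A j₂ k = some t → j₁ = j₂) ∧
  (∀ (j₁ j₂ : Fin F) (k₁ k₂ : Fin K) (t : S), j₁ ≠ j₂ → k₁ ≠ k₂ →
      A j₁ k₁ = some t → A j₂ k₂ = some t → A j₁ k₂ = none ∧ A j₂ k₁ = none)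

/-- `sPDA F K Z` is the minimum size of an alphabet `S` for which an `S`-PDA with
parameters `(F, K, Z)` exists. -/
noncomputable def sPDA (F K Z : ℕ) : ℕ :=
  sInf {n : ℕ | ∃ A : Fin F → Fin K → Option (Fin n), IsPDA F K Z A}

/-!
In a column that contains a symbol `t`, every other row containing `t` has an empty cell, so `t`
occurs at most `Z + 1` times. Counting the `K * (F - Z)` filled cells symbol by symbol gives
`K * (F - Z) ≤ s(F, K, Z) * (Z + 1)`. Deleting columns never increases `s`, and deleting
`x < (Z + 1) / (F - Z)` of them removes fewer than `Z + 1` filled cells, which is not enough to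
lower the rounded-down bound `K * (F - Z) / (Z + 1)` that the original array attains.
-/

/-- The positions of the nonempty cells of an array. -/
noncomputable def filledCells {S : Type} {F K : ℕ} (A : Fin F → Fin K → Option S) :
    Finset (Fin F × Fin K) :=
  Finset.univ.filter fun p => A p.1 p.2 ≠ none

/-- The positions of an array at which the symbol `t` occurs. -/
noncomputable def symbolCells {S : Type} {F K : ℕ} (A : Fin F → Fin K → Option S) (t : S) :
    Finset (Fin F × Fin K) :=
  Finset.univ.filter fun p => A p.1 p.2 = some t

@[simp]
theorem mem_symbolCells {S : Type} {F K : ℕ} {A : Fin F → Fin K → Option S} {t : S}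
    {p : Fin F × Fin K} : p ∈ symbolCells A t ↔ A p.1 p.2 = some t := by
  simp [symbolCells]

theorem card_filledCells_eq_sum_card_symbolCells {S : Type} [Fintype S] {F K : ℕ}
    (A : Fin F → Fin K → Option S) :
    (filledCells A).card = ∑ t, (symbolCells A t).card := by
  have filledCells_eq : filledCells A = Finset.univ.biUnion (symbolCells A) := by
    ext p
    simp [filledCells, Option.ne_none_iff_exists']
  rw [filledCells_eq, Finset.card_biUnion]
  intro t _ u _ htu
  refine Finset.disjoint_left.mpr fun p hpt hpu => htu ?_
  rw [mem_symbolCells] at hpt hpu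
  exact Option.some_injective S (hpt.symm.trans hpu)

namespace IsPDA

variable {S : Type} {F K Z : ℕ} {A : Fin F → Fin K → Option S}

theorem card_filter_ne_none (hA : IsPDA F K Z A) (k : Fin K) :
    (Finset.univ.filter fun j => A j k ≠ none).card = F - Z := by
  have hsplit := Finset.card_filter_add_card_filter_not
    (s := (Finset.univ : Finset (Fin F))) (fun j => A j k = none)
  rw [hA.1 k, Finset.card_univ, Fintype.card_fin] at hsplit
  exact Nat.eq_sub_of_add_eq' hsplit

theorem card_filledCells (hA : IsPDA F K Z A) : (filledCells A).card = K * (F - Z) := by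
  calc (filledCells A).card
      = ∑ k, (Finset.univ.filter fun j => A j k ≠ none).card := by
        simp only [filledCells, Finset.card_filter, Fintype.sum_prod_type_right]
    _ = K * (F - Z) := by
        simp only [hA.card_filter_ne_none, Finset.sum_const, Finset.card_univ, Fintype.card_fin,
          smul_eq_mul]

theorem injOn_fst_symbolCells (hA : IsPDA F K Z A) (t : S) :
    Set.InjOn Prod.fst (symbolCells A t : Set (Fin F × Fin K)) := by
  rintro ⟨j, k₁⟩ h₁ ⟨_, k₂⟩ h₂ rfl
  rw [Finset.mem_coe, mem_symbolCells] at h₁ h₂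
  rw [hA.2.1 j k₁ k₂ t h₁ h₂]

theorem eq_or_eq_none_of_eq_some (hA : IsPDA F K Z A) {j₀ j : Fin F} {k₀ k : Fin K} {t : S}
    (h₀ : A j₀ k₀ = some t) (h : A j k = some t) : j = j₀ ∨ A j k₀ = none := by
  by_cases hj : j = j₀
  · exact .inl hj
  have hk : k ≠ k₀ := by
    rintro rfl
    exact hj (hA.2.2.1 j j₀ k t h h₀)
  exact .inr (hA.2.2.2 j j₀ k k₀ t hj hk h h₀).1

theorem card_symbolCells_le (hA : IsPDA F K Z A) (t : S) : (symbolCells A t).card ≤ Z + 1 := by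
  obtain hempty | ⟨⟨j₀, k₀⟩, h₀⟩ := (symbolCells A t).eq_empty_or_nonempty
  · simp [hempty]
  rw [mem_symbolCells] at h₀
  let emptyRows := Finset.univ.filter fun j => A j k₀ = none
  have hmaps : ∀ p ∈ symbolCells A t, p.1 ∈ insert j₀ emptyRows := fun p hp => by
    simpa [emptyRows] using hA.eq_or_eq_none_of_eq_some h₀ (mem_symbolCells.mp hp)
  calc (symbolCells A t).card
      ≤ (insert j₀ emptyRows).card :=
        Finset.card_le_card_of_injOn Prod.fst hmaps (hA.injOn_fst_symbolCells t)
    _ ≤ emptyRows.card + 1 := Finset.card_insert_le _ _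
    _ = Z + 1 := by rw [hA.1 k₀]

theorem mul_sub_le_card_mul [Fintype S] (hA : IsPDA F K Z A) :
    K * (F - Z) ≤ Fintype.card S * (Z + 1) := by
  rw [← hA.card_filledCells, card_filledCells_eq_sum_card_symbolCells]
  exact Finset.sum_le_card_nsmul _ _ _ fun t _ => hA.card_symbolCells_le t

theorem comp_injective {K' : ℕ} (hA : IsPDA F K Z A) {e : Fin K' → Fin K}
    (he : Function.Injective e) : IsPDA F K' Z fun j k => A j (e k) :=
  ⟨fun k => hA.1 (e k),
    fun j k₁ k₂ t h₁ h₂ => he (hA.2.1 j (e k₁) (e k₂) t h₁ h₂),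
    fun j₁ j₂ k t h₁ h₂ => hA.2.2.1 j₁ j₂ (e k) t h₁ h₂,
    fun j₁ j₂ k₁ k₂ t hj hk => hA.2.2.2 j₁ j₂ (e k₁) (e k₂) t hj (he.ne hk)⟩

end IsPDA

theorem exists_isPDA {F Z : ℕ} (hZ : Z ≤ F) (K : ℕ) :
    ∃ (n : ℕ) (A : Fin F → Fin K → Option (Fin n)), IsPDA F K Z A := by
  -- Leave the first `Z` rows empty and fill all other cells with pairwise distinct symbols.
  let A : Fin F → Fin K → Option (Fin (F * K)) := fun j k =>
    if j.val < Z then none else some (finProdFinEquiv (j, k))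
  have hinj : ∀ {j₁ j₂ k₁ k₂ t}, A j₁ k₁ = some t → A j₂ k₂ = some t → j₁ = j₂ ∧ k₁ = k₂ := by
    intro j₁ j₂ k₁ k₂ t h₁ h₂
    simp only [A, Option.ite_none_left_eq_some, Option.some.injEq] at h₁ h₂
    exact Prod.mk.inj (finProdFinEquiv.injective (h₁.2.trans h₂.2.symm))
  refine ⟨F * K, A, fun k => ?_, fun j k₁ k₂ t h₁ h₂ => (hinj h₁ h₂).2,
    fun j₁ j₂ k t h₁ h₂ => (hinj h₁ h₂).1,
    fun j₁ j₂ k₁ k₂ t hj _ h₁ h₂ => absurd (hinj h₁ h₂).1 hj⟩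
  simp [A, Fin.card_filter_val_lt, hZ]

theorem exists_isPDA_sPDA {F Z : ℕ} (hZ : Z ≤ F) (K : ℕ) :
    ∃ A : Fin F → Fin K → Option (Fin (sPDA F K Z)), IsPDA F K Z A :=
  Nat.sInf_mem (exists_isPDA hZ K)

theorem mul_sub_le_sPDA_mul {F Z : ℕ} (hZ : Z ≤ F) (K : ℕ) :
    K * (F - Z) ≤ sPDA F K Z * (Z + 1) := by
  obtain ⟨A, hA⟩ := exists_isPDA_sPDA hZ K
  simpa only [Fintype.card_fin] using hA.mul_sub_le_card_mul

theorem monotone_sPDA {F Z : ℕ} (hZ : Z ≤ F) : Monotone fun K => sPDA F K Z := by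
  intro K' K hK
  obtain ⟨A, hA⟩ := exists_isPDA_sPDA hZ K
  exact Nat.sInf_le ⟨_, hA.comp_injective (Fin.castLE_injective hK)⟩

theorem mul_sub_div_le_sPDA_sub {F Z : ℕ} (hZ : Z ≤ F) (K : ℕ) {x : ℕ}
    (hx : x * (F - Z) < Z + 1) : K * (F - Z) / (Z + 1) ≤ sPDA F (K - x) Z := by
  rw [← Nat.lt_succ_iff, Nat.div_lt_iff_lt_mul Z.succ_pos]
  calc K * (F - Z)
      ≤ (K - x + x) * (F - Z) := Nat.mul_le_mul_right _ le_tsub_add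
    _ = (K - x) * (F - Z) + x * (F - Z) := Nat.add_mul _ _ _
    _ < sPDA F (K - x) Z * (Z + 1) + (Z + 1) :=
        Nat.add_lt_add_of_le_of_lt (mul_sub_le_sPDA_mul hZ (K - x)) hx
    _ = (sPDA F (K - x) Z + 1) * (Z + 1) := (Nat.succ_mul _ _).symm

theorem stmt_10 (F K Z : ℕ) (hF : 0 < F) (hK : 0 < K) (hZ : Z < F)
    (hdvd : (Z + 1) ∣ K * (F - Z))
    (hs : sPDA F K Z = K * (F - Z) / (Z + 1)) :
    ∀ x : ℕ, (x : ℚ) < ((Z : ℚ) + 1) / ((F - Z : ℕ) : ℚ) → 1 ≤ K - x →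
      sPDA F (K - x) Z = K * (F - Z) / (Z + 1) := by
  intro x hx _
  have hFZ : (0 : ℚ) < ((F - Z : ℕ) : ℚ) := by exact_mod_cast Nat.sub_pos_of_lt hZ
  have hx_mul : x * (F - Z) < Z + 1 := by exact_mod_cast (lt_div_iff₀ hFZ).mp hx
  apply le_antisymm
  · exact (monotone_sPDA hZ.le (Nat.sub_le K x)).trans_eq hs
  · exact mul_sub_div_le_sPDA_sub hZ.le K hx_mul
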